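/- Let A be an invertible k×k integer matrix whose only complex eigenvalue is 1. Then for every natural number m ≥ 1 there exists n ≥ 1 such that every entry of A^n - I is divisible by m. In fact one may take n = (k-1)!·m. -/

import Mathlib

/-!
By Cayley–Hamilton, `A = 1 + N` with `N ^ k = 0`, so `A ^ n - 1` is the sum of the
`n.choose j • N ^ j` over `0 < j < k`. Every such `j` divides `(k - 1)!`, and
`j * n.choose j = n * (n - 1).choose (j - 1)`, so all of these binomial coefficients are
divisible by `m` once `n = (k - 1)! * m`.
-/

open Matrix Polynomial

theorem dvd_choose_mul_of_dvd {c j : ℕ} (m : ℕ) (hj : j ≠ 0) (hjc : j ∣ c) :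
    m ∣ (c * m).choose j := by
  obtain ⟨d, rfl⟩ := hjc
  obtain ⟨i, rfl⟩ := Nat.exists_eq_succ_of_ne_zero hj
  rcases hn : (i + 1) * d * m with _ | n
  · simp
  · refine ⟨d * n.choose i, Nat.eq_of_mul_eq_mul_right i.succ_pos ?_⟩
    calc (n + 1).choose (i + 1) * (i + 1)
        = (n + 1) * n.choose i := (Nat.add_one_mul_choose_eq n i).symm
      _ = m * (d * n.choose i) * (i + 1) := by rw [← hn]; ring

section Unipotent

variable {R : Type*} [Ring R]

theorem pow_sub_one_eq_sum_choose (a : R) (n : ℕ) :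
    a ^ n - 1 = ∑ j ∈ Finset.range n, (n.choose (j + 1) : R) * (a - 1) ^ (j + 1) := by
  have binomial := (Commute.one_right (a - 1)).add_pow n
  rw [sub_add_cancel, Finset.sum_range_succ'] at binomial
  simp [binomial, Nat.cast_comm]

variable {a : R} {k : ℕ}

theorem natCast_dvd_pow_sub_one_of_dvd_choose {m n : ℕ} (ha : (a - 1) ^ k = 0)
    (hchoose : ∀ j, j ≠ 0 → j < k → m ∣ n.choose j) : (m : R) ∣ a ^ n - 1 := by
  rw [pow_sub_one_eq_sum_choose]
  refine Finset.dvd_sum fun j _ ↦ ?_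
  rcases lt_or_ge (j + 1) k with hjk | hkj
  · exact (Nat.cast_dvd_cast (hchoose _ j.succ_ne_zero hjk)).mul_right _
  · rw [pow_eq_zero_of_le hkj ha, mul_zero]
    exact dvd_zero _

theorem natCast_dvd_pow_factorial_mul_sub_one (ha : (a - 1) ^ k = 0) (m : ℕ) :
    (m : R) ∣ a ^ ((k - 1).factorial * m) - 1 :=
  natCast_dvd_pow_sub_one_of_dvd_choose ha fun _ hj hjk ↦
    dvd_choose_mul_of_dvd m hj <|
      Nat.dvd_factorial (Nat.pos_of_ne_zero hj) (Nat.le_sub_one_of_lt hjk)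

end Unipotent

theorem eq_X_sub_C_pow_natDegree_of_splits {R : Type*} [CommRing R] [IsDomain R] {p : R[X]} {c : R}
    (hp : p.Monic) (hsplits : p.Splits) (hroot : ∀ z, p.IsRoot z → z = c) :
    p = (X - C c) ^ p.natDegree := by
  have roots_eq : p.roots = Multiset.replicate p.natDegree c :=
    Multiset.eq_replicate.mpr
      ⟨hsplits.natDegree_eq_card_roots.symm, fun z hz ↦ hroot z (isRoot_of_mem_roots hz)⟩
  conv_lhs => rw [hsplits.eq_prod_roots_of_monic hp, roots_eq]
  simp

theorem natCast_dvd_apply_of_natCast_dvd {ι R : Type*} [Fintype ι] [DecidableEq ι] [Semiring R]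
    {M : Matrix ι ι R} {m : ℕ} (h : (m : Matrix ι ι R) ∣ M) (i j : ι) : (m : R) ∣ M i j := by
  obtain ⟨B, rfl⟩ := h
  exact ⟨B i j, by simp [← nsmul_eq_mul]⟩

section Charpoly

variable {ι R : Type*} [Fintype ι] [DecidableEq ι] [CommRing R] {A : Matrix ι ι R}

theorem charpoly_eq_X_sub_C_pow_of_forall_isRoot {K : Type*} [Field K] [IsAlgClosed K]
    {f : R →+* K} (hf : Function.Injective f) {c : R}
    (hroot : ∀ z, (A.map f).charpoly.IsRoot z → z = f c) :
    A.charpoly = (X - C c) ^ Fintype.card ι := by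
  apply Polynomial.map_injective f hf
  have map_eq := eq_X_sub_C_pow_natDegree_of_splits (A.map f).charpoly_monic
    (IsAlgClosed.splits _) hroot
  rw [charpoly_natDegree_eq_dim, charpoly_map] at map_eq
  simpa using map_eq

theorem sub_algebraMap_pow_eq_zero_of_charpoly_eq {c : R} {k : ℕ}
    (hA : A.charpoly = (X - C c) ^ k) : (A - algebraMap R (Matrix ι ι R) c) ^ k = 0 := by
  simpa [hA] using A.aeval_self_charpoly

theorem stmt_1_general (hA : A.charpoly = (X - C 1) ^ Fintype.card ι) (m : ℕ) (i j : ι) :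
    (m : R) ∣ (A ^ ((Fintype.card ι - 1).factorial * m) - 1) i j := by
  have unipotent : (A - 1) ^ Fintype.card ι = 0 := by
    simpa only [map_one] using sub_algebraMap_pow_eq_zero_of_charpoly_eq hA
  exact natCast_dvd_apply_of_natCast_dvd (natCast_dvd_pow_factorial_mul_sub_one unipotent m) i j

end Charpoly

theorem stmt_1 (k : ℕ) (A : Matrix (Fin k) (Fin k) ℤ) (hA : IsUnit A)
    (heig : ∀ z : ℂ, ((A.map (Int.cast : ℤ → ℂ)).charpoly).IsRoot z → z = 1)
    (m : ℕ) (hm : 1 ≤ m) :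
    ∃ n : ℕ, 1 ≤ n ∧ n = (k - 1).factorial * m ∧
      ∀ i j : Fin k, (m : ℤ) ∣ (A ^ n - 1) i j := by
  have hchar : A.charpoly = (X - C 1) ^ Fintype.card (Fin k) :=
    charpoly_eq_X_sub_C_pow_of_forall_isRoot (f := Int.castRingHom ℂ) Int.cast_injective
      (by simpa using heig)
  exact ⟨_, Nat.mul_pos (Nat.factorial_pos _) hm, rfl, by simpa using stmt_1_general hchar m⟩
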